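/- Let (X,d) be a locally compact length space and ρ: X → (0,∞) continuous. Define the weighted length metric d_ρ(x,y) = inf{∫_a^b ρ(β_t)|β'_t| dt : β: [a,b] → X absolutely continuous from x to y}. If ∫_0^∞ ρ(β_t)|β'_t| dt = ∞ for every locally absolutely continuous curve β: [0,∞) → X that eventually leaves every compact subset of X, then (X, d_ρ) is a proper geodesic metric space. -/

import Mathlib

open Filter MeasureTheory Set Topology
open scoped ENNReal NNReal

noncomputable section

/-- The metric speed of a curve `β` at time `t` w.r.t. a distance function `dist`. -/
def mSpeed {X : Type*} (dst : X → X → ℝ) (β : ℝ → X) (t : ℝ) : ℝ :=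
  Filter.limsup (fun e : ℝ => dst (β (t + e)) (β t) / |e|) (nhdsWithin (0 : ℝ) {0}ᶜ)

/-- The generalized metric speed `v_β(s,t)` of a curve `β` w.r.t. the family of
metrics `d`. -/
def genSpeed {X : Type*} (d : ℝ → X → X → ℝ) (β : ℝ → X) (s t : ℝ) : ℝ :=
  Filter.limsup (fun e : ℝ => (∫ u in t..(t + e), mSpeed (d s) β u) / e)
    (nhdsWithin (0 : ℝ) {0}ᶜ)

/-- Absolute continuity of a curve on `[a,b]` w.r.t. a distance function. -/
def ACOn {X : Type*} (dst : X → X → ℝ) (β : ℝ → X) (a b : ℝ) : Prop :=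
  ∃ g : ℝ → ℝ, MeasureTheory.IntegrableOn g (Set.Icc a b) ∧
    ∀ ⦃t u : ℝ⦄, t ∈ Set.Icc a b → u ∈ Set.Icc a b → t ≤ u →
      dst (β t) (β u) ≤ ∫ r in t..u, g r

/-- The standard distance on `ℝ`. -/
def rdist : ℝ → ℝ → ℝ := fun x y => |x - y|

/-- `d` is a family of metrics on `X` indexed by `s ∈ I`, each generating the
topology of `X`. -/
def IsMetricFamily {X : Type*} [TopologicalSpace X] (I : Set ℝ) (d : ℝ → X → X → ℝ) : Prop :=
  ∀ s ∈ I,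
    (∀ x : X, d s x x = 0) ∧ (∀ x y : X, x ≠ y → 0 < d s x y) ∧
    (∀ x y : X, d s x y = d s y x) ∧ (∀ x y z : X, d s x z ≤ d s x y + d s y z) ∧
    (∀ x : X, (nhds x).HasBasis (fun ε : ℝ => 0 < ε) (fun ε => {y | d s x y < ε}))

/-- Condition (C): local uniform continuity of `s ↦ d_s` in a logarithmic sense. -/
def CondC {X : Type*} [TopologicalSpace X] (I : Set ℝ) (d : ℝ → X → X → ℝ) : Prop :=
  ∀ J : Set ℝ, ∀ K : Set X, J ⊆ I → IsCompact J → IsCompact K →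
    ∃ r > (0 : ℝ), ∃ ω : ℝ → ℝ, ω 0 = 0 ∧ Monotone ω ∧ ContinuousAt ω 0 ∧
      ∀ s ∈ J, ∀ s' ∈ J, ∀ x ∈ K, ∀ y ∈ K, x ≠ y →
        sInf ((fun u => d u x y) '' J) < r →
        |Real.log (d s x y / d s' x y)| ≤ ω |s - s'|

/-- Condition (L): local log-Lipschitz dependence of `d_s` on `s`. -/
def CondL {X : Type*} [TopologicalSpace X] (I : Set ℝ) (d : ℝ → X → X → ℝ) : Prop :=
  ∀ J : Set ℝ, ∀ K : Set X, J ⊆ I → IsCompact J → IsCompact K →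
    ∃ C > (0 : ℝ), ∃ r > (0 : ℝ),
      ∀ s ∈ J, ∀ s' ∈ J, ∀ x ∈ K, ∀ y ∈ K, x ≠ y →
        sInf ((fun u => d u x y) '' J) < r →
        |Real.log (d s x y / d s' x y)| ≤ C * |s - s'|

/-- Condition (H): Lipschitz continuity of `h` in the time variable, locally
uniformly. -/
def CondH {X : Type*} [TopologicalSpace X] (I : Set ℝ) (h : ℝ → X → ℝ) : Prop :=
  ∀ J : Set ℝ, ∀ K : Set X, J ⊆ I → IsCompact J → IsCompact K →
    ∃ C' > (0 : ℝ), ∀ s ∈ J, ∀ s' ∈ J, ∀ x ∈ K, |h s x - h s' x| ≤ C' * |s - s'|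

/-- A curve `(α, β) : [a,b] → I × X` with both components absolutely continuous. -/
def CurveIn {X : Type*} (I : Set ℝ) (d : ℝ → X → X → ℝ) (α : ℝ → ℝ) (β : ℝ → X)
    (a b : ℝ) : Prop :=
  a < b ∧ ACOn rdist α a b ∧ (∀ s ∈ I, ACOn (d s) β a b) ∧ ∀ t ∈ Set.Icc a b, α t ∈ I

/-- Future directed: `α' > 0` a.e. -/
def FutureDirected (α : ℝ → ℝ) (a b : ℝ) : Prop :=
  ∀ᵐ t : ℝ, t ∈ Set.Ioo a b → 0 < deriv α t

/-- Past directed: `α' < 0` a.e. -/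
def PastDirected (α : ℝ → ℝ) (a b : ℝ) : Prop :=
  ∀ᵐ t : ℝ, t ∈ Set.Ioo a b → deriv α t < 0

/-- The causality inequality `v_β(α_t,t)² ≤ h(γ_t)² α'(t)²` a.e. -/
def CausalIneq {X : Type*} (d : ℝ → X → X → ℝ) (h : ℝ → X → ℝ) (α : ℝ → ℝ)
    (β : ℝ → X) (a b : ℝ) : Prop :=
  ∀ᵐ t : ℝ, t ∈ Set.Ioo a b →
    (genSpeed d β (α t) t) ^ 2 ≤ (h (α t) (β t)) ^ 2 * (deriv α t) ^ 2

/-- The timelike inequality `v_β(α_t,t)² < h(γ_t)² α'(t)²` a.e. -/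
def TimelikeIneq {X : Type*} (d : ℝ → X → X → ℝ) (h : ℝ → X → ℝ) (α : ℝ → ℝ)
    (β : ℝ → X) (a b : ℝ) : Prop :=
  ∀ᵐ t : ℝ, t ∈ Set.Ioo a b →
    (genSpeed d β (α t) t) ^ 2 < (h (α t) (β t)) ^ 2 * (deriv α t) ^ 2

/-- Future directed causal curve. -/
def FutureCausal {X : Type*} (I : Set ℝ) (d : ℝ → X → X → ℝ) (h : ℝ → X → ℝ)
    (α : ℝ → ℝ) (β : ℝ → X) (a b : ℝ) : Prop :=
  CurveIn I d α β a b ∧ FutureDirected α a b ∧ CausalIneq d h α β a b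

/-- Future directed timelike curve. -/
def FutureTimelike {X : Type*} (I : Set ℝ) (d : ℝ → X → X → ℝ) (h : ℝ → X → ℝ)
    (α : ℝ → ℝ) (β : ℝ → X) (a b : ℝ) : Prop :=
  CurveIn I d α β a b ∧ FutureDirected α a b ∧ TimelikeIneq d h α β a b

/-- Causal curve (future or past directed). -/
def CausalCurve {X : Type*} (I : Set ℝ) (d : ℝ → X → X → ℝ) (h : ℝ → X → ℝ)
    (α : ℝ → ℝ) (β : ℝ → X) (a b : ℝ) : Prop :=
  CurveIn I d α β a b ∧ (FutureDirected α a b ∨ PastDirected α a b) ∧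
    CausalIneq d h α β a b

/-- The causal relation `p ≤ q` in the generalized Lorentzian product. -/
def causalRel {X : Type*} (I : Set ℝ) (d : ℝ → X → X → ℝ) (h : ℝ → X → ℝ)
    (p q : ℝ × X) : Prop :=
  ∃ a b α β, FutureCausal I d h α β a b ∧
    α a = p.1 ∧ β a = p.2 ∧ α b = q.1 ∧ β b = q.2

/-- The chronological relation `p ≪ q` in the generalized Lorentzian product. -/
def chronRel {X : Type*} (I : Set ℝ) (d : ℝ → X → X → ℝ) (h : ℝ → X → ℝ)
    (p q : ℝ × X) : Prop :=
  ∃ a b α β, FutureTimelike I d h α β a b ∧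
    α a = p.1 ∧ β a = p.2 ∧ α b = q.1 ∧ β b = q.2

/-- The Lorentzian length of a curve. -/
def lorLen {X : Type*} (d : ℝ → X → X → ℝ) (h : ℝ → X → ℝ) (α : ℝ → ℝ) (β : ℝ → X)
    (a b : ℝ) : ℝ :=
  ∫ t in a..b,
    Real.sqrt ((h (α t) (β t)) ^ 2 * (deriv α t) ^ 2 - (genSpeed d β (α t) t) ^ 2)

/-- The time separation function `τ` of the generalized Lorentzian product. -/
def timeSep {X : Type*} (I : Set ℝ) (d : ℝ → X → X → ℝ) (h : ℝ → X → ℝ)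
    (p q : ℝ × X) : ℝ≥0∞ :=
  sSup {l | ∃ a b α β, FutureCausal I d h α β a b ∧
    α a = p.1 ∧ β a = p.2 ∧ α b = q.1 ∧ β b = q.2 ∧
    l = ENNReal.ofReal (lorLen d h α β a b)}

end

noncomputable section

open Filter MeasureTheory Set Topology
open scoped ENNReal

/-- The length of a curve `β : [0,1] → X` weighted by the conformal factor `g`. -/
def confLen {X : Type*} [MetricSpace X] (g : X → ℝ) (β : ℝ → X) : ℝ :=
  ∫ t in (0 : ℝ)..1, g (β t) * mSpeed (fun a b : X => dist a b) β t

/-- The conformally weighted length metric `d_g`. -/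
def confMetric {X : Type*} [MetricSpace X] (g : X → ℝ) (x y : X) : ℝ :=
  sInf {l | ∃ β : ℝ → X, ACOn (fun a b : X => dist a b) β 0 1 ∧
    β 0 = x ∧ β 1 = y ∧ l = confLen g β}

/-- `X` is a length space: the distance is the infimum of lengths of absolutely
continuous curves. -/
def IsLengthMetric (X : Type*) [MetricSpace X] : Prop :=
  ∀ x y : X, dist x y = confMetric (fun _ => (1 : ℝ)) x y

/-- A curve `β : [0,∞) → X` eventually leaves every compact set. -/
def TendsToInfinityIn {X : Type*} [TopologicalSpace X] (β : ℝ → X) : Prop :=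
  ∀ K : Set X, IsCompact K → ∃ T > (0 : ℝ), ∀ t ≥ T, β t ∉ K

section Speed

variable {X : Type*} [MetricSpace X]

/-- The metric speed with respect to the ambient distance. -/
abbrev speed (β : ℝ → X) (t : ℝ) : ℝ := mSpeed (fun a b : X => dist a b) β t

/-- Absolute continuity with respect to the ambient distance. -/
abbrev AbsCont (β : ℝ → X) (a b : ℝ) : Prop := ACOn (fun a b : X => dist a b) β a b

lemma speed_eq_sInf (β : ℝ → X) (t : ℝ) :
    speed β t = sInf {C | ∀ᶠ e in 𝓝[≠] (0 : ℝ), dist (β (t + e)) (β t) / |e| ≤ C} :=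
  Filter.limsup_eq

lemma nonneg_of_eventually_quotient_le {β : ℝ → X} {t C : ℝ}
    (h : ∀ᶠ e in 𝓝[≠] (0 : ℝ), dist (β (t + e)) (β t) / |e| ≤ C) : 0 ≤ C := by
  obtain ⟨e, he⟩ := h.exists
  exact le_trans (by positivity) he

lemma speed_nonneg (β : ℝ → X) (t : ℝ) : 0 ≤ speed β t := by
  rw [speed_eq_sInf]
  exact Real.sInf_nonneg fun C hC => nonneg_of_eventually_quotient_le hC

lemma eventually_quotient_le {β : ℝ → X} {t C : ℝ}
    (h : ∀ᶠ e in 𝓝 (0 : ℝ), dist (β (t + e)) (β t) ≤ C * |e|) :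
    ∀ᶠ e in 𝓝[≠] (0 : ℝ), dist (β (t + e)) (β t) / |e| ≤ C := by
  filter_upwards [nhdsWithin_le_nhds h, self_mem_nhdsWithin] with e he he0
  rwa [div_le_iff₀ (abs_pos.2 he0)]

lemma speed_le {β : ℝ → X} {t C : ℝ}
    (h : ∀ᶠ e in 𝓝 (0 : ℝ), dist (β (t + e)) (β t) ≤ C * |e|) : speed β t ≤ C := by
  rw [speed_eq_sInf]
  exact csInf_le ⟨0, fun C hC => nonneg_of_eventually_quotient_le hC⟩ (eventually_quotient_le h)

lemma speed_congr {β γ : ℝ → X} {t : ℝ} (h : β =ᶠ[𝓝 t] γ) : speed β t = speed γ t := by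
  refine Filter.limsup_congr ?_
  have hs : Tendsto (fun e : ℝ => t + e) (𝓝[≠] 0) (𝓝 t) := by
    have : Tendsto (fun e : ℝ => t + e) (𝓝 0) (𝓝 (t + 0)) :=
      (continuous_const.add continuous_id).tendsto 0
    rw [add_zero] at this
    exact this.mono_left nhdsWithin_le_nhds
  filter_upwards [hs.eventually h] with e he
  simp only [he, h.self_of_nhds]

lemma speed_comp_affine (β : ℝ → X) {m : ℝ} (hm : m ≠ 0) (q t : ℝ) :
    speed (fun s => β (m * s + q)) t = |m| * speed β (m * t + q) := by
  have hmap : Filter.map (fun e : ℝ => m * e) (𝓝[≠] 0) = 𝓝[≠] 0 := by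
    have := (Homeomorph.mulLeft₀ m hm).isEmbedding.map_nhdsWithin_eq ({0}ᶜ) 0
    simp only [Homeomorph.coe_mulLeft₀, mul_zero] at this
    rw [this]
    congr 1
    ext y
    simp only [mem_image, mem_compl_iff, mem_singleton_iff]
    exact ⟨fun ⟨x, hx, h⟩ => h ▸ mul_ne_zero hm hx,
      fun hy => ⟨y / m, div_ne_zero hy hm, by field_simp⟩⟩
  rw [speed_eq_sInf, speed_eq_sInf, ← smul_eq_mul |m|, ← Real.sInf_smul_of_nonneg (abs_nonneg m)]
  congr 1
  ext C
  have hm' := abs_pos.2 hm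
  rw [Set.mem_smul_set_iff_inv_smul_mem₀ hm'.ne']
  simp only [mem_ofPred_eq, smul_eq_mul]
  conv_rhs => rw [← hmap]
  rw [Filter.eventually_map]
  refine Filter.eventually_congr (Filter.Eventually.of_forall fun e => ?_)
  rw [show m * (t + e) + q = m * t + q + m * e by ring, abs_mul, le_inv_mul_iff₀ hm',
    div_mul_eq_div_div_swap, mul_div_cancel₀ _ hm'.ne']

lemma abs_deriv_le_speed {β : ℝ → X} {t C : ℝ} {f : ℝ → ℝ}
    (hβ : ∀ᶠ e in 𝓝 (0 : ℝ), dist (β (t + e)) (β t) ≤ C * |e|)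
    (hf : ∀ᶠ e in 𝓝 (0 : ℝ), |f (t + e) - f t| ≤ dist (β (t + e)) (β t))
    (hd : DifferentiableAt ℝ f t) : |deriv f t| ≤ speed β t := by
  rw [speed_eq_sInf]
  refine le_csInf ⟨C, eventually_quotient_le hβ⟩ fun K hK => ?_
  refine le_of_tendsto (hasDerivAt_iff_tendsto_slope_zero.1 hd.hasDerivAt).abs ?_
  filter_upwards [nhdsWithin_le_nhds hf, hK] with e he hK
  refine le_trans ?_ hK
  rw [smul_eq_mul, abs_mul, abs_inv, div_eq_inv_mul]
  gcongr

lemma measurable_speed {β : ℝ → X} (hβ : Continuous β) : Measurable (speed β) := by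
  let A : ℕ → ℝ → ℝ≥0∞ := fun n t =>
    ⨆ e : ℝ, ⨆ _ : e ≠ 0 ∧ |e| < 1 / ((n : ℝ) + 1),
      ENNReal.ofReal (dist (β (t + e)) (β t) / |e|)
  have hA : ∀ n, Measurable (A n) := fun n =>
    (lowerSemicontinuous_iSup fun e => lowerSemicontinuous_iSup fun _ =>
      (ENNReal.continuous_ofReal.comp (by fun_prop)).lowerSemicontinuous).measurable
  have key : ∀ n t (C : ℝ), A n t ≤ ENNReal.ofReal C → 0 ≤ C →
      ∀ᶠ e in 𝓝[≠] (0 : ℝ), dist (β (t + e)) (β t) / |e| ≤ C := by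
    intro n t C h hC
    have hn : (0 : ℝ) < 1 / ((n : ℝ) + 1) := by positivity
    filter_upwards [self_mem_nhdsWithin, nhdsWithin_le_nhds (Metric.ball_mem_nhds (0 : ℝ) hn)]
      with e he hen
    have := (le_iSup₂ (f := fun (e : ℝ) (_ : e ≠ 0 ∧ |e| < 1 / ((n : ℝ) + 1)) =>
      ENNReal.ofReal (dist (β (t + e)) (β t) / |e|)) e ⟨he, by simpa using hen⟩).trans h
    exact (ENNReal.ofReal_le_ofReal_iff hC).1 this
  have key' : ∀ t (C : ℝ), (∀ᶠ e in 𝓝[≠] (0 : ℝ), dist (β (t + e)) (β t) / |e| ≤ C) →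
      ∃ n, A n t ≤ ENNReal.ofReal C := by
    intro t C h
    obtain ⟨δ, hδ, hsub⟩ := Metric.mem_nhdsWithin_iff.1 h
    obtain ⟨n, hn⟩ := exists_nat_one_div_lt hδ
    refine ⟨n, iSup₂_le fun e he => ENNReal.ofReal_le_ofReal (hsub ⟨?_, he.1⟩)⟩
    simpa using he.2.trans hn
  have : speed β = fun t => (⨅ n, A n t).toReal := by
    funext t
    rw [speed_eq_sInf]
    by_cases htop : (⨅ n, A n t) = ∞
    · rw [htop, ENNReal.toReal_top]
      convert Real.sInf_empty
      refine Set.eq_empty_of_forall_notMem fun C hC => ?_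
      obtain ⟨n, hn⟩ := key' t C hC
      exact ENNReal.ofReal_ne_top (top_le_iff.1 (htop ▸ (iInf_le _ n).trans hn))
    · apply le_antisymm
      · rw [← ENNReal.ofReal_le_iff_le_toReal htop]
        refine le_iInf fun n => ?_
        by_cases hn : A n t = ∞
        · simp [hn]
        · rw [ENNReal.ofReal_le_iff_le_toReal hn]
          exact csInf_le ⟨0, fun C hC => nonneg_of_eventually_quotient_le hC⟩
            (key n t _ (ENNReal.ofReal_toReal hn).ge ENNReal.toReal_nonneg)
      · have hne : ∃ n, A n t ≠ ∞ := by
          by_contra! h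
          exact htop (by simp [h])
        obtain ⟨n, hn⟩ := hne
        refine le_csInf ⟨_, key n t _ (ENNReal.ofReal_toReal hn).ge ENNReal.toReal_nonneg⟩
          fun C hC => ?_
        obtain ⟨k, hk⟩ := key' t C hC
        exact ENNReal.toReal_le_of_le_ofReal (nonneg_of_eventually_quotient_le hC)
          ((iInf_le _ k).trans hk)
  rw [this]
  exact (Measurable.iInf hA).ennreal_toReal

end Speed

section AbsolutelyContinuousCurves

variable {X : Type*} [MetricSpace X] {β γ : ℝ → X} {a b c : ℝ}

lemma AbsCont.exists_primitive (h : AbsCont β a b) (hab : a ≤ b) :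
    ∃ g : ℝ → ℝ, IntervalIntegrable g volume a b ∧
      ∀ s ∈ Icc a b, ∀ t ∈ Icc a b,
        dist (β s) (β t) ≤ |(∫ r in a..s, g r) - ∫ r in a..t, g r| := by
  obtain ⟨g, hg, hd⟩ := h
  have hgi : IntervalIntegrable g volume a b :=
    (intervalIntegrable_iff_integrableOn_Icc_of_le hab).2 hg
  refine ⟨g, hgi, ?_⟩
  have hsub : ∀ s ∈ Icc a b, IntervalIntegrable g volume a s := fun s hs =>
    hgi.mono_set (by rw [uIcc_of_le hab, uIcc_of_le hs.1]; exact Icc_subset_Icc_right hs.2)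
  have key : ∀ s ∈ Icc a b, ∀ t ∈ Icc a b, s ≤ t →
      dist (β s) (β t) ≤ |(∫ r in a..s, g r) - ∫ r in a..t, g r| := by
    intro s hs t ht hst
    rw [abs_sub_comm, intervalIntegral.integral_interval_sub_left (hsub t ht) (hsub s hs)]
    exact (hd hs ht hst).trans (le_abs_self _)
  intro s hs t ht
  rcases le_total s t with hst | hst
  · exact key s hs t ht hst
  · rw [dist_comm, abs_sub_comm]
    exact key t ht s hs hst

lemma AbsCont.continuousOn (h : AbsCont β a b) (hab : a ≤ b) : ContinuousOn β (Icc a b) := by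
  obtain ⟨g, hg, hd⟩ := h.exists_primitive hab
  have hG := intervalIntegral.continuousOn_primitive_interval' hg left_mem_uIcc
  rw [uIcc_of_le hab] at hG
  intro t ht
  have hGt := hG t ht
  rw [ContinuousWithinAt, tendsto_iff_dist_tendsto_zero] at hGt ⊢
  refine squeeze_zero' (Eventually.of_forall fun _ => dist_nonneg) ?_ hGt
  filter_upwards [self_mem_nhdsWithin] with s hs
  exact hd s hs t ht

lemma eventually_add_mem_Icc {t : ℝ} (ht : t ∈ Ioo a b) : ∀ᶠ e in 𝓝 (0 : ℝ), t + e ∈ Icc a b := by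
  have : Tendsto (fun e : ℝ => t + e) (𝓝 0) (𝓝 (t + 0)) :=
    (continuous_const.add continuous_id).tendsto 0
  rw [add_zero] at this
  exact this.eventually (Icc_mem_nhds ht.1 ht.2)

lemma AbsCont.ae_eventually_dist_le (h : AbsCont β a b) (hab : a ≤ b) :
    ∃ g : ℝ → ℝ, IntervalIntegrable g volume a b ∧
      ∀ᵐ t, t ∈ Ioo a b → ∀ C > |g t|, ∀ᶠ e in 𝓝 (0 : ℝ), dist (β (t + e)) (β t) ≤ C * |e| := by
  obtain ⟨g, hg, hd⟩ := h.exists_primitive hab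
  refine ⟨g, hg, ?_⟩
  filter_upwards [hg.ae_hasDerivAt_integral] with t ht htab C hC
  rw [uIcc_of_le hab] at ht
  have htI := Ioo_subset_Icc_self htab
  have hder := ht htI a (left_mem_Icc.2 hab)
  have h1 := (hasDerivAt_iff_isLittleO_nhds_zero.1 hder).def (sub_pos.2 hC)
  filter_upwards [h1, eventually_add_mem_Icc htab] with e he hmem
  refine (hd _ hmem _ htI).trans ?_
  rw [Real.norm_eq_abs, Real.norm_eq_abs, smul_eq_mul] at he
  have := abs_add_le ((∫ r in a..t + e, g r) - (∫ r in a..t, g r) - e * g t) (e * g t)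
  rw [sub_add_cancel, abs_mul e] at this
  linarith

lemma AbsCont.intervalIntegrable_speed (h : AbsCont β a b) (hab : a ≤ b) :
    IntervalIntegrable (speed β) volume a b := by
  obtain ⟨g, hg, hd⟩ := h.ae_eventually_dist_le hab
  have hγ : Continuous (IccExtend hab (domRestrict (Icc a b) β)) :=
    (continuousOn_iff_continuous_domRestrict.1 (h.continuousOn hab)).Icc_extend'
  rw [intervalIntegrable_iff_integrableOn_Ioo_of_le hab] at hg ⊢
  refine hg.norm.mono ?_ ?_
  · refine (measurable_speed hγ).aestronglyMeasurable.congr ?_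
    filter_upwards [ae_restrict_mem measurableSet_Ioo] with t ht
    refine speed_congr ?_
    filter_upwards [Icc_mem_nhds ht.1 ht.2] with s hs
    rw [IccExtend_of_mem _ _ hs, domRestrict_apply]
  · filter_upwards [ae_restrict_mem measurableSet_Ioo, ae_restrict_of_ae hd] with t ht htd
    rw [Real.norm_of_nonneg (speed_nonneg β t), norm_norm, Real.norm_eq_abs]
    exact le_of_forall_gt_imp_ge_of_dense fun C hC => speed_le (htd ht C hC)

lemma AbsCont.intervalIntegrable_mul_speed (h : AbsCont β a b) (hab : a ≤ b) {ρ : X → ℝ}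
    (hρ : Continuous ρ) : IntervalIntegrable (fun t => ρ (β t) * speed β t) volume a b := by
  refine (h.intervalIntegrable_speed hab).continuousOn_mul ?_
  rw [uIcc_of_le hab]
  exact hρ.comp_continuousOn (h.continuousOn hab)

lemma AbsCont.absolutelyContinuousOnInterval_comp (h : AbsCont β a b) (hab : a ≤ b) {f : ℝ → ℝ}
    (hf : ∀ s ∈ Icc a b, ∀ t ∈ Icc a b, |f s - f t| ≤ dist (β s) (β t)) :
    AbsolutelyContinuousOnInterval f a b := by
  obtain ⟨g, hg, hd⟩ := h.exists_primitive hab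
  have hG := hg.absolutelyContinuousOnInterval_intervalIntegral left_mem_uIcc
  rw [absolutelyContinuousOnInterval_iff] at hG ⊢
  intro ε hε
  obtain ⟨δ, hδ, H⟩ := hG ε hε
  refine ⟨δ, hδ, fun E hE hlt => (Finset.sum_le_sum fun i hi => ?_).trans_lt (H E hE hlt)⟩
  have hmem := hE.1 i hi
  rw [uIcc_of_le hab] at hmem
  exact (hf _ hmem.1 _ hmem.2).trans (hd _ hmem.1 _ hmem.2)

lemma AbsCont.ae_abs_deriv_le_speed (h : AbsCont β a b) (hab : a ≤ b) {f : ℝ → ℝ}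
    (hf : ∀ s ∈ Icc a b, ∀ t ∈ Icc a b, |f s - f t| ≤ dist (β s) (β t)) :
    ∀ᵐ t, t ∈ Ioo a b → |deriv f t| ≤ speed β t := by
  obtain ⟨g, hg, hd⟩ := h.ae_eventually_dist_le hab
  filter_upwards [hd] with t ht htab
  by_cases hdiff : DifferentiableAt ℝ f t
  · refine abs_deriv_le_speed (ht htab _ (lt_add_one _)) ?_ hdiff
    filter_upwards [eventually_add_mem_Icc htab] with e he
    exact hf _ he _ (Ioo_subset_Icc_self htab)
  · rw [deriv_zero_of_not_differentiableAt hdiff, abs_zero]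
    exact speed_nonneg β t

/-- A curve starting at `β a` has large weighted length as soon as it ends far away, if the weight
is bounded below near `β a`. -/
lemma AbsCont.mul_min_le_integral (h : AbsCont β a b) (hab : a ≤ b) {ρ : X → ℝ}
    (hρ : Continuous ρ) (hρ0 : ∀ x, 0 ≤ ρ x) {k r : ℝ} (hk : 0 ≤ k)
    (hkρ : ∀ z, dist (β a) z < r → k ≤ ρ z) (hr : 0 ≤ r) :
    k * min (dist (β a) (β b)) r ≤ ∫ t in a..b, ρ (β t) * speed β t := by
  set u : ℝ → ℝ := fun t => min (dist (β a) (β t)) r with hu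
  have hlip : ∀ s ∈ Icc a b, ∀ t ∈ Icc a b, |u s - u t| ≤ dist (β s) (β t) := by
    intro s _ t _
    refine (abs_min_sub_min_le_max _ _ _ _).trans ?_
    rw [sub_self, abs_zero, max_eq_left (abs_nonneg _), dist_comm (β a), dist_comm (β a)]
    exact abs_dist_sub_le _ _ _
  have hac := h.absolutelyContinuousOnInterval_comp hab hlip
  have hval : ∫ t in a..b, deriv u t = min (dist (β a) (β b)) r := by
    rw [hac.integral_deriv_eq_sub, hu]
    simp [hr]
  rw [← hval, ← intervalIntegral.integral_const_mul]
  simp only [intervalIntegral.integral_of_le hab, integral_Ioc_eq_integral_Ioo]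
  refine setIntegral_mono_on_ae
    ((intervalIntegrable_iff_integrableOn_Ioo_of_le hab).1
      (hac.intervalIntegrable_deriv.const_mul k))
    ((intervalIntegrable_iff_integrableOn_Ioo_of_le hab).1
      (h.intervalIntegrable_mul_speed hab hρ)) measurableSet_Ioo ?_
  filter_upwards [h.ae_abs_deriv_le_speed hab hlip] with t ht htab
  have hspeed := speed_nonneg β t
  by_cases hlt : dist (β a) (β t) < r
  · calc k * deriv u t ≤ k * speed β t := by gcongr; exact (le_abs_self _).trans (ht htab)
      _ ≤ ρ (β t) * speed β t := by gcongr; exact hkρ _ hlt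
  · have hmax : IsLocalMax u t := Eventually.of_forall fun s => by
      simp only [hu]
      rw [min_eq_right (not_lt.1 hlt)]
      exact min_le_right _ _
    rw [hmax.deriv_eq_zero, mul_zero]
    exact mul_nonneg (hρ0 _) hspeed

lemma AbsCont.dist_le_integral_speed (h : AbsCont β a b) (hab : a ≤ b) :
    dist (β a) (β b) ≤ ∫ t in a..b, speed β t := by
  have := h.mul_min_le_integral hab (ρ := fun _ => 1) continuous_const (fun _ => zero_le_one)
    zero_le_one (fun _ _ => le_rfl) (dist_nonneg (x := β a) (y := β b))
  simpa using this

lemma AbsCont.mono (h : AbsCont β a b) {s t : ℝ} (hs : a ≤ s) (ht : t ≤ b) : AbsCont β s t := by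
  obtain ⟨g, hg, hd⟩ := h
  exact ⟨g, hg.mono_set (Icc_subset_Icc hs ht), fun x y hx hy hxy =>
    hd (Icc_subset_Icc hs ht hx) (Icc_subset_Icc hs ht hy) hxy⟩

lemma AbsCont.congr (h : AbsCont β a b) (hβγ : ∀ t ∈ Icc a b, β t = γ t) : AbsCont γ a b := by
  obtain ⟨g, hg, hd⟩ := h
  refine ⟨g, hg, fun x y hx hy hxy => ?_⟩
  rw [← hβγ x hx, ← hβγ y hy]
  exact hd hx hy hxy

lemma AbsCont.trans (h₁ : AbsCont β a b) (h₂ : AbsCont β b c) (hab : a ≤ b) (hbc : b ≤ c) :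
    AbsCont β a c := by
  obtain ⟨g₁, hg₁, hd₁⟩ := h₁
  obtain ⟨g₂, hg₂, hd₂⟩ := h₂
  set g : ℝ → ℝ := fun t => if t ≤ b then g₁ t else g₂ t with hg
  have hgL : IntegrableOn g (Icc a b) := hg₁.congr_fun (fun t ht => by simp [hg, ht.2])
    measurableSet_Icc
  have hgR : IntegrableOn g (Ioc b c) := (hg₂.mono_set Ioc_subset_Icc_self).congr_fun
    (fun t ht => by simp [hg, ht.1]) measurableSet_Ioc
  have hgi : IntegrableOn g (Icc a c) := by
    rw [← Icc_union_Ioc_eq_Icc hab hbc]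
    exact hgL.union hgR
  have hL : ∀ s ∈ Icc a b, ∀ t ∈ Icc a b, s ≤ t → dist (β s) (β t) ≤ ∫ r in s..t, g r := by
    intro s hs t ht hst
    refine (hd₁ hs ht hst).trans_eq ?_
    simp only [intervalIntegral.integral_of_le hst]
    exact setIntegral_congr_fun measurableSet_Ioc fun r hr => by simp [hg, hr.2.trans ht.2]
  have hR : ∀ s ∈ Icc b c, ∀ t ∈ Icc b c, s ≤ t → dist (β s) (β t) ≤ ∫ r in s..t, g r := by
    intro s hs t ht hst
    refine (hd₂ hs ht hst).trans_eq ?_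
    simp only [intervalIntegral.integral_of_le hst]
    exact setIntegral_congr_fun measurableSet_Ioc fun r hr => by simp [hg, hs.1.trans_lt hr.1]
  have hint : ∀ s ∈ Icc a c, ∀ t ∈ Icc a c, IntervalIntegrable g volume s t := fun s hs t ht =>
    (hgi.mono_set (by rw [← uIcc_of_le (hab.trans hbc)] at hs ht ⊢; exact uIcc_subset_uIcc hs ht)
      ).intervalIntegrable
  refine ⟨g, hgi, fun s t hs ht hst => ?_⟩
  rcases le_total t b with htb | hbt
  · exact hL s ⟨hs.1, hst.trans htb⟩ t ⟨ht.1, htb⟩ hst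
  rcases le_total b s with hbs | hsb
  · exact hR s ⟨hbs, hs.2⟩ t ⟨hbt, ht.2⟩ hst
  rw [← intervalIntegral.integral_add_adjacent_intervals (hint s hs b ⟨hab, hbc⟩)
    (hint b ⟨hab, hbc⟩ t ht)]
  exact (dist_triangle _ (β b) _).trans (add_le_add
    (hL s ⟨hs.1, hsb⟩ b ⟨hab, le_rfl⟩ hsb) (hR b ⟨le_rfl, hbc⟩ t ⟨hbt, ht.2⟩ hbt))

/-- Lipschitz curves are absolutely continuous. -/
lemma absCont_of_dist_le {C : ℝ}
    (h : ∀ s ∈ Icc a b, ∀ t ∈ Icc a b, dist (β s) (β t) ≤ C * |s - t|) : AbsCont β a b := by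
  refine ⟨fun _ => C, by simp, fun s t hs ht hst => (h s hs t ht).trans ?_⟩
  rw [intervalIntegral.integral_const, smul_eq_mul, abs_sub_comm, abs_of_nonneg (sub_nonneg.2 hst),
    mul_comm]

end AbsolutelyContinuousCurves

section WeightedLength

variable {X : Type*} [MetricSpace X] {β γ : ℝ → X} {ρ : X → ℝ} {a b c d : ℝ}

lemma AbsCont.comp_affine (h : AbsCont β c d) {m q : ℝ} (hm : m ≠ 0)
    (hmaps : ∀ t ∈ Icc a b, m * t + q ∈ Icc c d) : AbsCont (fun t => β (m * t + q)) a b := by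
  obtain ⟨g, hg, hd⟩ := h
  have hgi : Integrable (fun t => (Icc c d).indicator g (m * t + q)) :=
    (((integrable_indicator_iff measurableSet_Icc).2 hg).comp_add_right q).comp_mul_left' hm
  refine ⟨fun t => |m| * g (m * t + q), ?_, fun s t hs ht hst => ?_⟩
  · have hgm : IntegrableOn (fun t => |m| * (Icc c d).indicator g (m * t + q)) (Icc a b) :=
      (hgi.const_mul |m|).integrableOn
    refine hgm.congr_fun (fun t ht => ?_) measurableSet_Icc
    simp only [indicator_of_mem (hmaps t ht)]
  · have hint := intervalIntegral.smul_integral_comp_mul_add (a := s) (b := t) g m q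
    rw [intervalIntegral.integral_const_mul]
    rcases hm.lt_or_gt with hneg | hpos
    · rw [abs_of_neg hneg, neg_mul, ← smul_eq_mul, hint, ← intervalIntegral.integral_symm]
      refine (dist_comm _ _).trans_le ?_
      exact hd (hmaps t ht) (hmaps s hs)
        (by linarith [mul_le_mul_of_nonpos_left hst hneg.le])
    · rw [abs_of_pos hpos, ← smul_eq_mul, hint]
      exact hd (hmaps s hs) (hmaps t ht) (by linarith [mul_le_mul_of_nonneg_left hst hpos.le])

/-- The length of the restriction of `β` to `[a, b]`, weighted by `ρ`. -/
def weightedLength (ρ : X → ℝ) (β : ℝ → X) (a b : ℝ) : ℝ :=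
  ∫ t in a..b, ρ (β t) * speed β t

lemma weightedLength_comp_affine (ρ : X → ℝ) (β : ℝ → X) {m : ℝ} (hm : m ≠ 0) (q a b : ℝ) :
    weightedLength ρ (fun t => β (m * t + q)) a b =
      (|m| / m) * weightedLength ρ β (m * a + q) (m * b + q) := by
  unfold weightedLength
  rw [← intervalIntegral.smul_integral_comp_mul_add (fun t => ρ (β t) * speed β t) m q,
    smul_eq_mul, ← mul_assoc, div_mul_cancel₀ _ hm, ← intervalIntegral.integral_const_mul]
  refine intervalIntegral.integral_congr fun t _ => ?_
  simp only [speed_comp_affine β hm q t]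
  ring

lemma weightedLength_nonneg (hρ0 : ∀ x, 0 ≤ ρ x) (hab : a ≤ b) : 0 ≤ weightedLength ρ β a b :=
  intervalIntegral.integral_nonneg hab fun t _ => mul_nonneg (hρ0 _) (speed_nonneg β t)

lemma weightedLength_congr (hab : a ≤ b) (h : ∀ t ∈ Ioo a b, β t = γ t) :
    weightedLength ρ β a b = weightedLength ρ γ a b := by
  refine intervalIntegral.integral_congr_Ioo_of_le hab fun t ht => ?_
  have : β =ᶠ[𝓝 t] γ := by
    filter_upwards [Ioo_mem_nhds ht.1 ht.2] with s hs using h s hs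
  simp only [h t ht, speed_congr this]

lemma AbsCont.weightedLength_add (h : AbsCont β a c) (hρ : Continuous ρ) (hab : a ≤ b)
    (hbc : b ≤ c) :
    weightedLength ρ β a b + weightedLength ρ β b c = weightedLength ρ β a c :=
  intervalIntegral.integral_add_adjacent_intervals
    ((h.mono le_rfl hbc).intervalIntegrable_mul_speed hab hρ)
    ((h.mono hab le_rfl).intervalIntegrable_mul_speed hbc hρ)

lemma absCont_const (x : X) : AbsCont (fun _ => x) a b :=
  absCont_of_dist_le (C := 0) fun _ _ _ _ => by simp

end WeightedLength

section ConformalMetric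

variable {X : Type*} [MetricSpace X] {β : ℝ → X} {ρ : X → ℝ} {a b : ℝ} {x y z : X}

lemma confMetric_nonneg (hρ0 : ∀ x, 0 ≤ ρ x) : 0 ≤ confMetric ρ x y := by
  refine Real.sInf_nonneg ?_
  rintro l ⟨β, -, -, -, rfl⟩
  exact weightedLength_nonneg hρ0 zero_le_one

lemma confMetric_le_weightedLength_of_lt (hρ0 : ∀ x, 0 ≤ ρ x) (h : AbsCont β a b) (hab : a < b) :
    confMetric ρ (β a) (β b) ≤ weightedLength ρ β a b := by
  have hm : 0 < b - a := sub_pos.2 hab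
  refine csInf_le ⟨0, ?_⟩ ⟨fun t => β ((b - a) * t + a), ?_, by simp, by simp, ?_⟩
  · rintro l ⟨β, -, -, -, rfl⟩
    exact weightedLength_nonneg hρ0 zero_le_one
  · exact h.comp_affine hm.ne' fun t ht => ⟨by nlinarith [ht.1], by nlinarith [ht.2]⟩
  · change _ = weightedLength ρ _ 0 1
    rw [weightedLength_comp_affine ρ β hm.ne', abs_of_pos hm, div_self hm.ne']
    simp

lemma confMetric_self (hρ0 : ∀ x, 0 ≤ ρ x) : confMetric ρ x x = 0 := by
  refine le_antisymm ?_ (confMetric_nonneg hρ0)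
  have h := confMetric_le_weightedLength_of_lt hρ0 (absCont_const x) zero_lt_one
  have h0 : ∀ t, speed (fun _ : ℝ => x) t = 0 := fun t =>
    le_antisymm (speed_le (C := 0) (Eventually.of_forall fun _ => by simp)) (speed_nonneg _ t)
  simpa [weightedLength, h0] using h

lemma confMetric_le_weightedLength (hρ0 : ∀ x, 0 ≤ ρ x) (h : AbsCont β a b) (hab : a ≤ b) :
    confMetric ρ (β a) (β b) ≤ weightedLength ρ β a b := by
  rcases hab.eq_or_lt with rfl | hab
  · rw [confMetric_self hρ0]
    exact weightedLength_nonneg hρ0 le_rfl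
  · exact confMetric_le_weightedLength_of_lt hρ0 h hab

/-- Every two points are the endpoints of an absolutely continuous curve. -/
def RectifiablyConnected (X : Type*) [MetricSpace X] : Prop :=
  ∀ x y : X, ∃ β : ℝ → X, AbsCont β 0 1 ∧ β 0 = x ∧ β 1 = y

lemma exists_weightedLength_lt (hX : RectifiablyConnected X) {R : ℝ} (h : confMetric ρ x y < R) :
    ∃ β : ℝ → X, AbsCont β 0 1 ∧ β 0 = x ∧ β 1 = y ∧ weightedLength ρ β 0 1 < R := by
  obtain ⟨β₀, h₀, hx, hy⟩ := hX x y
  obtain ⟨l, ⟨β, hβ, hβx, hβy, rfl⟩, hl⟩ := exists_lt_of_csInf_lt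
    (by exact ⟨_, β₀, h₀, hx, hy, rfl⟩) h
  exact ⟨β, hβ, hβx, hβy, hl⟩

lemma IsLengthMetric.exists_length_lt (hX : IsLengthMetric X) {R : ℝ} (h : dist x y < R) :
    ∃ β : ℝ → X, AbsCont β 0 1 ∧ β 0 = x ∧ β 1 = y ∧ ∫ t in (0 : ℝ)..1, speed β t < R := by
  have hne : ∃ β : ℝ → X, AbsCont β 0 1 ∧ β 0 = x ∧ β 1 = y := by
    by_cases hxy : x = y
    · exact ⟨fun _ => x, absCont_const x, rfl, hxy⟩
    · by_contra hempty
      refine hxy (dist_eq_zero.1 ?_)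
      rw [hX x y]
      refine (congrArg sInf (Set.eq_empty_of_forall_notMem ?_)).trans Real.sInf_empty
      rintro l ⟨β, hβ, hβx, hβy, -⟩
      exact hempty ⟨β, hβ, hβx, hβy⟩
  obtain ⟨β₀, h₀, hx, hy⟩ := hne
  rw [hX x y] at h
  obtain ⟨l, ⟨β, hβ, hβx, hβy, rfl⟩, hl⟩ := exists_lt_of_csInf_lt
    (by exact ⟨_, β₀, h₀, hx, hy, rfl⟩) h
  exact ⟨β, hβ, hβx, hβy, by simpa [confLen] using hl⟩

lemma IsLengthMetric.rectifiablyConnected (hX : IsLengthMetric X) : RectifiablyConnected X :=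
  fun x y =>
    let ⟨β, hβ, hx, hy, _⟩ := hX.exists_length_lt (lt_add_one (dist x y))
    ⟨β, hβ, hx, hy⟩

lemma confMetric_comm (hX : RectifiablyConnected X) (hρ0 : ∀ x, 0 ≤ ρ x) (x y : X) :
    confMetric ρ x y = confMetric ρ y x := by
  suffices H : ∀ x y : X, confMetric ρ y x ≤ confMetric ρ x y from le_antisymm (H y x) (H x y)
  intro x y
  refine le_of_forall_gt_imp_ge_of_dense fun R hR => ?_
  obtain ⟨β, hβ, rfl, rfl, hl⟩ := exists_weightedLength_lt hX hR
  have hβ' : AbsCont (fun t => β (-1 * t + 1)) 0 1 :=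
    hβ.comp_affine (by norm_num) fun t ht => ⟨by linarith [ht.2], by linarith [ht.1]⟩
  have h := confMetric_le_weightedLength_of_lt hρ0 hβ' zero_lt_one
  rw [weightedLength_comp_affine ρ β (by norm_num)] at h
  norm_num at h
  refine h.trans ?_
  rw [weightedLength, intervalIntegral.integral_symm, neg_neg]
  exact hl.le

lemma confMetric_triangle (hX : RectifiablyConnected X) (hρ : Continuous ρ) (hρ0 : ∀ x, 0 ≤ ρ x)
    (x y z : X) : confMetric ρ x z ≤ confMetric ρ x y + confMetric ρ y z := by
  refine le_of_forall_pos_le_add fun ε hε => ?_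
  obtain ⟨β₁, h₁, hx, hy, hl₁⟩ := exists_weightedLength_lt hX
    (lt_add_of_pos_right (confMetric ρ x y) (half_pos hε))
  obtain ⟨β₂, h₂, hy', hz, hl₂⟩ := exists_weightedLength_lt hX
    (lt_add_of_pos_right (confMetric ρ y z) (half_pos hε))
  set β : ℝ → X := fun t => if t ≤ 1 then β₁ t else β₂ (1 * t + -1) with hβ
  have e₁ : ∀ t ∈ Icc (0 : ℝ) 1, β₁ t = β t := fun t ht => by simp [hβ, ht.2]
  have e₂ : ∀ t ∈ Icc (1 : ℝ) 2, β₂ (1 * t + -1) = β t := fun t ht => by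
    rcases ht.1.eq_or_lt with rfl | h
    · simp [hβ, hy, hy']
    · simp [hβ, not_le.2 h]
  have h₂' : AbsCont (fun t => β₂ (1 * t + -1)) 1 2 :=
    h₂.comp_affine one_ne_zero fun t ht => ⟨by linarith [ht.1], by linarith [ht.2]⟩
  have hac : AbsCont β 0 2 := (h₁.congr e₁).trans (h₂'.congr e₂) zero_le_one one_le_two
  have h := confMetric_le_weightedLength_of_lt hρ0 hac zero_lt_two
  rw [← hac.weightedLength_add hρ zero_le_one one_le_two,
    weightedLength_congr zero_le_one (fun t ht => (e₁ t (Ioo_subset_Icc_self ht)).symm),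
    weightedLength_congr one_le_two (fun t ht => (e₂ t (Ioo_subset_Icc_self ht)).symm),
    weightedLength_comp_affine ρ β₂ one_ne_zero] at h
  rw [← e₁ 0 (by simp), ← e₂ 2 (by simp)] at h
  norm_num [hx, hz] at h
  linarith

lemma mul_min_le_confMetric (hX : RectifiablyConnected X) (hρ : Continuous ρ)
    (hρ0 : ∀ x, 0 ≤ ρ x) {k r : ℝ} (hk : 0 ≤ k) (hkρ : ∀ z, dist x z < r → k ≤ ρ z) (hr : 0 ≤ r)
    (y : X) : k * min (dist x y) r ≤ confMetric ρ x y := by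
  refine le_of_forall_gt_imp_ge_of_dense fun R hR => ?_
  obtain ⟨β, hβ, rfl, rfl, hl⟩ := exists_weightedLength_lt hX hR
  exact (hβ.mul_min_le_integral zero_le_one hρ hρ0 hk hkρ hr).trans hl.le

lemma exists_mul_min_le_confMetric (hX : RectifiablyConnected X) (hρ : Continuous ρ)
    (hρ0 : ∀ x, 0 ≤ ρ x) {k : ℝ} (hk : 0 ≤ k) (hkρ : k < ρ x) :
    ∃ r > 0, ∀ y, k * min (dist x y) r ≤ confMetric ρ x y := by
  obtain ⟨r, hr, hsub⟩ := Metric.mem_nhds_iff.1 (hρ.continuousAt.eventually (lt_mem_nhds hkρ))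
  exact ⟨r, hr, mul_min_le_confMetric hX hρ hρ0 hk
    (fun z hz => (hsub (by rwa [Metric.mem_ball'])).le) hr.le⟩

lemma exists_confMetric_lt (hX : IsLengthMetric X) (hρ : Continuous ρ) (hρ0 : ∀ x, 0 ≤ ρ x)
    (x : X) {ε : ℝ} (hε : 0 < ε) : ∃ δ > 0, ∀ y, dist x y < δ → confMetric ρ x y < ε := by
  set M := ρ x + 1
  have hM : 0 < M := by linarith [hρ0 x]
  obtain ⟨r, hr, hsub⟩ := Metric.mem_nhds_iff.1
    (hρ.continuousAt.eventually (gt_mem_nhds (lt_add_one (ρ x))))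
  refine ⟨min r (ε / M), by positivity, fun y hy => ?_⟩
  obtain ⟨β, hβ, rfl, rfl, hl⟩ := hX.exists_length_lt hy
  have hball : ∀ t ∈ Icc (0 : ℝ) 1, ρ (β t) ≤ M := fun t ht => by
    refine (hsub (Metric.mem_ball'.2 ?_)).le
    refine ((hβ.mono le_rfl ht.2).dist_le_integral_speed ht.1).trans_lt
      (lt_of_le_of_lt ?_ (hl.trans_le (min_le_left _ _)))
    exact intervalIntegral.integral_mono_interval le_rfl ht.1 ht.2
      (Eventually.of_forall fun s => speed_nonneg β s) (hβ.intervalIntegrable_speed zero_le_one)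
  calc confMetric ρ (β 0) (β 1) ≤ weightedLength ρ β 0 1 :=
        confMetric_le_weightedLength_of_lt hρ0 hβ zero_lt_one
    _ ≤ ∫ t in (0 : ℝ)..1, M * speed β t :=
        intervalIntegral.integral_mono_on zero_le_one
          (hβ.intervalIntegrable_mul_speed zero_le_one hρ)
          ((hβ.intervalIntegrable_speed zero_le_one).const_mul M)
          fun t ht => mul_le_mul_of_nonneg_right (hball t ht) (speed_nonneg β t)
    _ < ε := by
        rw [intervalIntegral.integral_const_mul, ← lt_div_iff₀' hM]
        exact hl.trans_le (min_le_right _ _)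

lemma exists_dist_le_mul_confMetric [LocallyCompactSpace X] (hX : RectifiablyConnected X)
    (hρ : Continuous ρ) (hρpos : ∀ x, 0 < ρ x) {K : Set X} (hK : IsCompact K) :
    ∃ C : ℝ, ∀ x ∈ K, ∀ y ∈ K, dist x y ≤ C * confMetric ρ x y := by
  rcases K.eq_empty_or_nonempty with rfl | hne
  · exact ⟨0, by simp⟩
  obtain ⟨δ, hδ, hK'⟩ := hK.exists_isCompact_cthickening
  obtain ⟨p, -, hp⟩ := hK'.exists_isMinOn (hne.mono (Metric.self_subset_cthickening K))
    hρ.continuousOn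
  set M := Metric.diam K
  refine ⟨(M + δ) / (δ * ρ p), fun x hx y hy => ?_⟩
  have hM : dist x y ≤ M := Metric.dist_le_diam_of_mem hK.isBounded hx hy
  have hd : 0 ≤ dist x y := dist_nonneg
  have hmin := mul_min_le_confMetric hX hρ (fun x => (hρpos x).le) (hρpos p).le
    (fun z hz => isMinOn_iff.1 hp z (Metric.mem_cthickening_of_dist_le z x δ K hx
      (by rw [dist_comm]; exact hz.le))) hδ.le y
  rw [div_mul_eq_mul_div, le_div_iff₀ (mul_pos hδ (hρpos p))]
  refine le_trans ?_ (mul_le_mul_of_nonneg_left hmin (by linarith))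
  rw [show dist x y * (δ * ρ p) = dist x y * δ * ρ p by ring, mul_left_comm, mul_comm (ρ p)]
  refine mul_le_mul_of_nonneg_right ?_ (hρpos p).le
  rcases le_total (dist x y) δ with h | h
  · rw [min_eq_left h]; nlinarith
  · rw [min_eq_right h]; nlinarith

/-- A curve that is Lipschitz for `confMetric ρ` has controlled weighted speed. -/
lemma mul_speed_le_of_confMetric_le (hX : RectifiablyConnected X)
    (hρ : Continuous ρ) (hρpos : ∀ x, 0 < ρ x) {L t : ℝ}
    (h : ∀ᶠ e in 𝓝 (0 : ℝ), confMetric ρ (β t) (β (t + e)) ≤ L * |e|) :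
    ρ (β t) * speed β t ≤ L := by
  suffices H : ∀ k : ℝ, 0 < k → k < ρ (β t) → k * speed β t ≤ L by
    have hev : ∀ᶠ k in 𝓝[<] (ρ (β t)), k * speed β t ≤ L := by
      filter_upwards [Ioo_mem_nhdsLT (hρpos (β t))] with k hk using H k hk.1 hk.2
    exact le_of_tendsto (((continuous_id.mul continuous_const).tendsto (ρ (β t))).mono_left
      nhdsWithin_le_nhds) hev
  intro k hk hkρ
  obtain ⟨r, hr, hmin⟩ := exists_mul_min_le_confMetric hX hρ (fun x => (hρpos x).le) hk.le hkρ
  rw [← le_div_iff₀' hk]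
  refine speed_le ?_
  have hsmall : ∀ᶠ e in 𝓝 (0 : ℝ), L * |e| < k * r := by
    have : Tendsto (fun e : ℝ => L * |e|) (𝓝 0) (𝓝 (L * |0|)) :=
      (continuous_const.mul continuous_abs).tendsto 0
    exact this.eventually (gt_mem_nhds (by simp; positivity))
  filter_upwards [h, hsmall] with e he hlt
  have h1 := (hmin (β (t + e))).trans he
  rw [dist_comm, div_mul_eq_mul_div, le_div_iff₀' hk]
  rcases le_total (dist (β t) (β (t + e))) r with hle | hle
  · rwa [min_eq_left hle] at h1
  · rw [min_eq_right hle] at h1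
    exact absurd h1 (not_le.2 hlt)

end ConformalMetric

section HopfRinow

variable {Y : Type*} [MetricSpace Y]

/-- Every two points are joined by almost shortest curves of almost constant speed. -/
def HasAlmostGeodesics (Y : Type*) [MetricSpace Y] : Prop :=
  ∀ x y : Y, ∀ ε > 0, ∃ γ : ℝ → Y, γ 0 = x ∧ γ 1 = y ∧
    ∀ s ∈ Icc (0 : ℝ) 1, ∀ t ∈ Icc (0 : ℝ) 1, dist (γ s) (γ t) ≤ (dist x y + ε) * |s - t|

lemma HasAlmostGeodesics.exists_between (hY : HasAlmostGeodesics Y) {x y : Y} {R δ : ℝ}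
    (hR : 0 ≤ R) (hδ : 0 < δ) (h : dist x y < R + δ) :
    ∃ z, dist x z ≤ R ∧ dist z y ≤ δ := by
  obtain ⟨γ, rfl, rfl, hγ⟩ := hY x y _ (sub_pos.2 h)
  rw [add_sub_cancel] at hγ
  have hpos : 0 < R + δ := by linarith
  have hR1 : R / (R + δ) ≤ 1 := (div_le_one hpos).2 (by linarith)
  have hR0 : 0 ≤ R / (R + δ) := by positivity
  refine ⟨γ (R / (R + δ)), ?_, ?_⟩
  · refine (hγ 0 (by simp) _ ⟨hR0, hR1⟩).trans_eq ?_
    rw [zero_sub, abs_neg, abs_of_nonneg hR0, mul_div_cancel₀ _ hpos.ne']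
  · refine (hγ _ ⟨hR0, hR1⟩ 1 (by simp)).trans_eq ?_
    rw [abs_sub_comm, abs_of_nonneg (sub_nonneg.2 hR1)]
    field_simp
    ring

/-- **Hopf–Rinow–Cohn-Vossen**: closed balls in a complete locally compact length space are
compact. -/
theorem HasAlmostGeodesics.isCompact_closedBall [LocallyCompactSpace Y] [CompleteSpace Y]
    (hY : HasAlmostGeodesics Y) (x : Y) (r : ℝ) : IsCompact (Metric.closedBall x r) := by
  by_contra hr
  set S : Set ℝ := {s | 0 ≤ s ∧ IsCompact (Metric.closedBall x s)} with hS
  have h0 : (0 : ℝ) ∈ S := ⟨le_rfl, by simp⟩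
  have hbdd : BddAbove S := ⟨r, fun s hs => by
    by_contra! hlt
    exact hr (hs.2.of_isClosed_subset Metric.isClosed_closedBall
      (Metric.closedBall_subset_closedBall hlt.le))⟩
  set R := sSup S
  have hR0 : 0 ≤ R := le_csSup hbdd h0
  have htb : TotallyBounded (Metric.closedBall x R) := by
    refine Metric.totallyBounded_iff.2 fun ε hε => ?_
    obtain ⟨s, hs, hsR⟩ := exists_lt_of_lt_csSup ⟨0, h0⟩ (sub_lt_self R (half_pos hε))
    obtain ⟨t, ht, hcov⟩ := Metric.totallyBounded_iff.1 hs.2.totallyBounded _ (half_pos hε)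
    refine ⟨t, ht, fun z hz => ?_⟩
    rw [Metric.mem_closedBall'] at hz
    obtain ⟨w, hxw, hwz⟩ := hY.exists_between hs.1 (half_pos hε)
      (show dist x z < s + ε / 2 by linarith)
    have hw := hcov (Metric.mem_closedBall'.2 hxw)
    simp only [mem_iUnion, Metric.mem_ball] at hw ⊢
    obtain ⟨y, hy, hwy⟩ := hw
    refine ⟨y, hy, ?_⟩
    linarith [dist_triangle z w y, dist_comm z w]
  have hRc : IsCompact (Metric.closedBall x R) :=
    htb.isCompact_of_isClosed Metric.isClosed_closedBall
  obtain ⟨δ, hδ, hc⟩ := hRc.exists_isCompact_cthickening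
  have hmem : R + δ / 2 ∈ S := by
    refine ⟨by linarith, hc.of_isClosed_subset Metric.isClosed_closedBall fun z hz => ?_⟩
    rw [Metric.mem_closedBall'] at hz
    obtain ⟨w, hxw, hwz⟩ := hY.exists_between hR0 hδ (show dist x z < R + δ by linarith)
    exact Metric.mem_cthickening_of_dist_le z w δ _ (Metric.mem_closedBall'.2 hxw)
      (by rwa [dist_comm])
  linarith [le_csSup hbdd hmem]

/-- In a proper length space, every two points are joined by a constant speed geodesic. -/
theorem HasAlmostGeodesics.exists_geodesic (hY : HasAlmostGeodesics Y)
    (hc : ∀ (x : Y) (r : ℝ), IsCompact (Metric.closedBall x r)) (x y : Y) :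
    ∃ γ : ℝ → Y, γ 0 = x ∧ γ 1 = y ∧
      ∀ s ∈ Icc (0 : ℝ) 1, ∀ t ∈ Icc (0 : ℝ) 1, dist (γ s) (γ t) ≤ dist x y * |s - t| := by
  choose γ h0 h1 hγ using fun n : ℕ => hY x y (1 / ((n : ℝ) + 1)) (by positivity)
  have hlim : ∀ t : ℝ, ∃ z, t ∈ Icc (0 : ℝ) 1 →
      Tendsto (fun n => γ n t) (hyperfilter ℕ) (𝓝 z) := by
    intro t
    by_cases ht : t ∈ Icc (0 : ℝ) 1
    · have hmem : ∀ n, γ n t ∈ Metric.closedBall x (dist x y + 1) := by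
        intro n
        rw [Metric.mem_closedBall']
        have hn := hγ n 0 (by simp) t ht
        rw [h0, zero_sub, abs_neg, abs_of_nonneg ht.1] at hn
        have hle : 1 / ((n : ℝ) + 1) ≤ 1 := by
          rw [div_le_one (by positivity)]
          linarith [n.cast_nonneg (α := ℝ)]
        refine hn.trans ((mul_le_of_le_one_right (by positivity) ht.2).trans (by linarith))
      obtain ⟨z, -, hz⟩ := (hc x (dist x y + 1)).ultrafilter_le_nhds
        ((hyperfilter ℕ).map fun n => γ n t)
        (le_principal_iff.2 (Filter.mem_map.2 (univ_mem' hmem)))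
      exact ⟨z, fun _ => hz⟩
    · exact ⟨x, fun h => absurd h ht⟩
  choose z hz using hlim
  have hnat : (hyperfilter ℕ : Filter ℕ) ≤ atTop := Nat.hyperfilter_le_atTop
  refine ⟨z, ?_, ?_, fun s hs t ht => ?_⟩
  · exact tendsto_nhds_unique (hz 0 (by simp)) (by simp only [h0]; exact tendsto_const_nhds)
  · exact tendsto_nhds_unique (hz 1 (by simp)) (by simp only [h1]; exact tendsto_const_nhds)
  · refine le_of_tendsto_of_tendsto' ((hz s hs).dist (hz t ht)) ?_ fun n => hγ n s hs t ht
    have := (((tendsto_one_div_add_atTop_nhds_zero_nat (𝕜 := ℝ)).mono_left hnat).const_add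
      (dist x y)).mul_const |s - t|
    rwa [add_zero] at this

end HopfRinow

/-- The concatenation of a sequence of curves parametrized by `[0, 1]`. -/
def concat {X : Type*} (β : ℕ → ℝ → X) (t : ℝ) : X := β ⌊t⌋₊ (t - ⌊t⌋₊)

lemma concat_eq {X : Type*} {u : ℕ → X} {β : ℕ → ℝ → X} (h0 : ∀ n, β n 0 = u n)
    (h1 : ∀ n, β n 1 = u (n + 1)) (n : ℕ) {t : ℝ} (ht : t ∈ Icc (n : ℝ) (n + 1)) :
    β n (1 * t + -n) = concat β t := by
  rcases ht.2.eq_or_lt with rfl | hlt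
  · have : ⌊(n : ℝ) + 1⌋₊ = n + 1 := by exact_mod_cast Nat.floor_natCast (R := ℝ) (n + 1)
    simp [concat, this, h0, h1]
  · have : ⌊t⌋₊ = n := (Nat.floor_eq_iff (n.cast_nonneg.trans ht.1)).2 ⟨ht.1, hlt⟩
    simp [concat, this, sub_eq_add_neg]

section ConformalMetricSpace

variable {X : Type*} [MetricSpace X] {ρ : X → ℝ}

/-- The metric space structure induced by `confMetric ρ`, on the original topology. -/
abbrev confMetricSpace (hX : IsLengthMetric X) (hρ : Continuous ρ) (hρpos : ∀ x, 0 < ρ x) :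
    MetricSpace X :=
  have hρ0 : ∀ x, 0 ≤ ρ x := fun x => (hρpos x).le
  have hlower : ∀ x : X, ∃ k > 0, ∃ r > 0, ∀ y, k * min (dist x y) r ≤ confMetric ρ x y := fun x =>
    ⟨ρ x / 2, half_pos (hρpos x), exists_mul_min_le_confMetric hX.rectifiablyConnected hρ hρ0
      (half_pos (hρpos x)).le (half_lt_self (hρpos x))⟩
  MetricSpace.ofDistTopology (confMetric ρ) (fun _ => confMetric_self hρ0)
    (confMetric_comm hX.rectifiablyConnected hρ0)
    (confMetric_triangle hX.rectifiablyConnected hρ hρ0)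
    (by
      intro s
      rw [Metric.isOpen_iff]
      refine forall₂_congr fun x _ => ⟨fun ⟨δ, hδ, hsub⟩ => ?_, fun ⟨ε, hε, hsub⟩ => ?_⟩
      · obtain ⟨k, hk, r, hr, hle⟩ := hlower x
        refine ⟨k * min δ r, by positivity, fun y hy => hsub (Metric.mem_ball'.2 ?_)⟩
        have := lt_of_mul_lt_mul_left ((hle y).trans_lt hy) hk.le
        by_contra! hge
        exact absurd this (not_lt.2 (min_le_min_right r hge))
      · obtain ⟨δ, hδ, hlt⟩ := exists_confMetric_lt hX hρ hρ0 x hε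
        exact ⟨δ, hδ, fun y hy => hsub y (hlt y (Metric.mem_ball'.1 hy))⟩)
    (by
      intro x y hxy
      obtain ⟨k, hk, r, hr, hle⟩ := hlower x
      by_contra hne
      have := dist_pos.2 hne
      have : 0 < k * min (dist x y) r := by positivity
      linarith [hle y])

lemma tendsto_nhds_iff_confMetric (hX : IsLengthMetric X) (hρ : Continuous ρ)
    (hρpos : ∀ x, 0 < ρ x) {u : ℕ → X} {x : X} :
    Tendsto u atTop (𝓝 x) ↔ Tendsto (fun n => confMetric ρ (u n) x) atTop (𝓝 0) :=
  @tendsto_iff_dist_tendsto_zero X ℕ (confMetricSpace hX hρ hρpos).toPseudoMetricSpace u atTop x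

lemma hasAlmostGeodesics_confMetricSpace (hX : IsLengthMetric X) (hρ : Continuous ρ)
    (hρpos : ∀ x, 0 < ρ x) : @HasAlmostGeodesics X (confMetricSpace hX hρ hρpos) := by
  have hρ0 : ∀ x, 0 ≤ ρ x := fun x => (hρpos x).le
  intro x y ε hε
  change ∃ γ : ℝ → X, γ 0 = x ∧ γ 1 = y ∧ ∀ s ∈ Icc (0 : ℝ) 1, ∀ t ∈ Icc (0 : ℝ) 1,
    confMetric ρ (γ s) (γ t) ≤ (confMetric ρ x y + ε) * |s - t|
  obtain ⟨β, hβ, hx, hy, hl⟩ := exists_weightedLength_lt hX.rectifiablyConnected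
    (lt_add_of_pos_right (confMetric ρ x y) hε)
  set φ : ℝ → ℝ := weightedLength ρ β 0 with hφ
  have hφ0 : φ 0 = 0 := intervalIntegral.integral_same
  have hφc : ContinuousOn φ (Icc 0 1) := by
    have := intervalIntegral.continuousOn_primitive_interval'
      (hβ.intervalIntegrable_mul_speed zero_le_one hρ) left_mem_uIcc
    rwa [uIcc_of_le zero_le_one] at this
  have hφ1 : 0 ≤ φ 1 := weightedLength_nonneg hρ0 zero_le_one
  have hτ : ∀ s : ℝ, ∃ τ, (s = 0 → τ = 0) ∧ (s = 1 → τ = 1) ∧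
      (s ∈ Icc (0 : ℝ) 1 → τ ∈ Icc (0 : ℝ) 1 ∧ φ τ = s * φ 1) := by
    intro s
    by_cases hs0 : s = 0
    · exact ⟨0, by simp [hs0, hφ0]⟩
    by_cases hs1 : s = 1
    · exact ⟨1, by simp [hs1]⟩
    by_cases hs : s ∈ Icc (0 : ℝ) 1
    · obtain ⟨τ, hτ, h⟩ := intermediate_value_Icc zero_le_one hφc
        (show s * φ 1 ∈ Icc (φ 0) (φ 1) from
          ⟨by rw [hφ0]; exact mul_nonneg hs.1 hφ1, mul_le_of_le_one_left hφ1 hs.2⟩)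
      exact ⟨τ, by simp [hs0], by simp [hs1], fun _ => ⟨hτ, h⟩⟩
    · exact ⟨0, by simp, by simp [hs1], fun h => absurd h hs⟩
  choose τ h0 h1 hτ using hτ
  have hle : ∀ s ∈ Icc (0 : ℝ) 1, ∀ t ∈ Icc (0 : ℝ) 1, s ≤ t →
      confMetric ρ (β s) (β t) ≤ |φ s - φ t| := by
    intro s hs t ht hst
    have hadd := (hβ.mono le_rfl ht.2).weightedLength_add hρ hs.1 hst
    have hmono := confMetric_le_weightedLength hρ0 (hβ.mono hs.1 ht.2) hst
    rw [abs_sub_comm]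
    exact hmono.trans (le_trans (by simp only [hφ]; linarith) (le_abs_self _))
  refine ⟨fun s => β (τ s), by simp only [h0 0 rfl, hx], by simp only [h1 1 rfl, hy],
    fun s hs t ht => ?_⟩
  obtain ⟨hs1, hs2⟩ := hτ s hs
  obtain ⟨ht1, ht2⟩ := hτ t ht
  have key : confMetric ρ (β (τ s)) (β (τ t)) ≤ |φ (τ s) - φ (τ t)| := by
    rcases le_total (τ s) (τ t) with h | h
    · exact hle _ hs1 _ ht1 h
    · rw [confMetric_comm hX.rectifiablyConnected hρ0, abs_sub_comm]
      exact hle _ ht1 _ hs1 h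
  refine key.trans ?_
  rw [hs2, ht2, ← sub_mul, abs_mul, abs_of_nonneg hφ1, mul_comm]
  exact mul_le_mul_of_nonneg_right hl.le (abs_nonneg _)

section Concatenation

variable {u : ℕ → X} {β : ℕ → ℝ → X}

lemma absCont_concat (hβ : ∀ n, AbsCont (β n) 0 1) (h0 : ∀ n, β n 0 = u n)
    (h1 : ∀ n, β n 1 = u (n + 1)) (n : ℕ) : AbsCont (concat β) 0 n := by
  induction n with
  | zero =>
    refine absCont_of_dist_le (C := 0) fun s hs t ht => ?_
    simp only [Nat.cast_zero, Icc_self, mem_singleton_iff] at hs ht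
    simp [hs, ht]
  | succ n ih =>
    push_cast
    refine ih.trans (AbsCont.congr ?_ fun t ht => concat_eq h0 h1 n ht) n.cast_nonneg
      (by linarith)
    exact (hβ n).comp_affine one_ne_zero fun t ht => ⟨by linarith [ht.1], by linarith [ht.2]⟩

lemma lintegral_concat_le (hρ : Continuous ρ) (hρ0 : ∀ x, 0 ≤ ρ x)
    (hβ : ∀ n, AbsCont (β n) 0 1) (h0 : ∀ n, β n 0 = u n) (h1 : ∀ n, β n 1 = u (n + 1)) :
    ∫⁻ t in Ici (0 : ℝ), ENNReal.ofReal (ρ (concat β t) * speed (concat β) t) ≤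
      ∑' n, ENNReal.ofReal (weightedLength ρ (β n) 0 1) := by
  have hcov : Ici (0 : ℝ) ⊆ ⋃ n : ℕ, Icc (n : ℝ) (n + 1) := fun t ht =>
    mem_iUnion.2 ⟨⌊t⌋₊, Nat.floor_le ht, (Nat.lt_floor_add_one t).le⟩
  refine (lintegral_mono_set hcov).trans ((lintegral_iUnion_le _ _).trans
    (ENNReal.tsum_le_tsum fun n => le_of_eq ?_))
  have hle : (n : ℝ) ≤ n + 1 := by linarith
  have hac : AbsCont (concat β) n (n + 1) :=
    (absCont_concat hβ h0 h1 (n + 1)).mono n.cast_nonneg (by simp)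
  have hint := (intervalIntegrable_iff_integrableOn_Icc_of_le hle).1
    (hac.intervalIntegrable_mul_speed hle hρ)
  rw [← ofReal_integral_eq_lintegral_ofReal hint
    (Eventually.of_forall fun t => mul_nonneg (hρ0 _) (speed_nonneg _ t)),
    integral_Icc_eq_integral_Ioc, ← intervalIntegral.integral_of_le hle]
  change ENNReal.ofReal (weightedLength ρ (concat β) n (n + 1)) = _
  rw [weightedLength_congr hle
    (fun t ht => (concat_eq h0 h1 n (Ioo_subset_Icc_self ht)).symm),
    weightedLength_comp_affine ρ (β n) one_ne_zero]
  simp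

end Concatenation

/-- If curves leaving every compact set have infinite weighted length, then every rapidly Cauchy
sequence for `confMetric ρ` converges. -/
lemma exists_tendsto_of_confMetric_lt (hX : IsLengthMetric X) (hρ : Continuous ρ)
    (hρpos : ∀ x, 0 < ρ x)
    (hdiv : ∀ β : ℝ → X, (∀ b > (0 : ℝ), AbsCont β 0 b) → TendsToInfinityIn β →
      ∫⁻ t in Ici (0 : ℝ), ENNReal.ofReal (ρ (β t) * speed β t) = ∞)
    {u : ℕ → X} (hu : ∀ N n m, N ≤ n → N ≤ m → confMetric ρ (u n) (u m) < (1 / 2) ^ N) :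
    ∃ x, Tendsto u atTop (𝓝 x) := by
  have hρ0 : ∀ x, 0 ≤ ρ x := fun x => (hρpos x).le
  have hconn := hX.rectifiablyConnected
  have htri := confMetric_triangle hconn hρ hρ0
  choose β hβ h0 h1 hl using fun n : ℕ =>
    exists_weightedLength_lt hconn (hu n n (n + 1) le_rfl n.le_succ)
  have hfin : ¬ TendsToInfinityIn (concat β) := by
    intro hinf
    have htop := hdiv (concat β) (fun b _ =>
      (absCont_concat hβ h0 h1 ⌈b⌉₊).mono le_rfl (Nat.le_ceil b)) hinf
    refine absurd ((lintegral_concat_le hρ hρ0 hβ h0 h1).trans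
      (ENNReal.tsum_le_tsum fun n => ENNReal.ofReal_le_ofReal (hl n).le)) ?_
    rw [htop, ← ENNReal.ofReal_tsum_of_nonneg (fun n => by positivity) summable_geometric_two]
    simp
  simp only [TendsToInfinityIn, not_forall, not_exists, not_and, not_not] at hfin
  obtain ⟨K, hK, hKt⟩ := hfin
  have hτ : ∀ n : ℕ, ∃ t : ℝ, (n : ℝ) ≤ t ∧ concat β t ∈ K := by
    intro n
    obtain ⟨t, ht⟩ := hKt (n + 1) (by positivity)
    simp only [exists_prop] at ht
    exact ⟨t, by linarith [ht.1], ht.2⟩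
  choose τ hτn hτK using hτ
  have hclose : ∀ n, confMetric ρ (u n) (concat β (τ n)) ≤ 2 * (1 / 2) ^ n := by
    intro n
    have hnm : n ≤ ⌊τ n⌋₊ := Nat.le_floor (hτn n)
    have hτ0 : 0 ≤ τ n := n.cast_nonneg.trans (hτn n)
    set m := ⌊τ n⌋₊ with hm
    have hs0 : 0 ≤ τ n - m := sub_nonneg.2 (Nat.floor_le hτ0)
    have hs1 : τ n - m ≤ 1 := by linarith [Nat.lt_floor_add_one (τ n)]
    have hle := confMetric_le_weightedLength hρ0 ((hβ m).mono le_rfl hs1) hs0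
    have hadd := (hβ m).weightedLength_add hρ hs0 hs1
    have hnn := weightedLength_nonneg (β := β m) hρ0 hs1
    have hpow : ((1 : ℝ) / 2) ^ m ≤ (1 / 2) ^ n :=
      pow_le_pow_of_le_one (by norm_num) (by norm_num) hnm
    have hval : concat β (τ n) = β m (τ n - m) := rfl
    rw [h0, ← hval] at hle
    linarith [htri (u n) (u m) (concat β (τ n)), hu n n m le_rfl hnm, hl m]
  obtain ⟨x, -, φ, hφ, hlim⟩ := hK.tendsto_subseq hτK
  have hpow := tendsto_pow_atTop_nhds_zero_of_lt_one (r := (1 : ℝ) / 2) (by norm_num) (by norm_num)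
  have hsub : Tendsto (fun k => confMetric ρ (u (φ k)) x) atTop (𝓝 0) := by
    have h2 := ((hpow.comp hφ.tendsto_atTop).const_mul 2).add
      ((tendsto_nhds_iff_confMetric hX hρ hρpos).1 hlim)
    rw [mul_zero, add_zero] at h2
    exact squeeze_zero (fun _ => confMetric_nonneg hρ0)
      (fun k => (htri _ (concat β (τ (φ k))) _).trans (add_le_add (hclose _) le_rfl)) h2
  refine ⟨x, (tendsto_nhds_iff_confMetric hX hρ hρpos).2
    (squeeze_zero (fun _ => confMetric_nonneg hρ0) (fun n => ?_) hpow)⟩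
  have hev : ∀ᶠ k in atTop, confMetric ρ (u n) x ≤
      (1 / 2) ^ n + confMetric ρ (u (φ k)) x := by
    filter_upwards [eventually_ge_atTop n] with k hk
    exact (htri _ (u (φ k)) _).trans
      (add_le_add (hu n n (φ k) le_rfl (hk.trans (hφ.id_le k))).le le_rfl)
  have hlim' := hsub.const_add ((1 / 2 : ℝ) ^ n)
  rw [add_zero] at hlim'
  exact ge_of_tendsto hlim' hev

end ConformalMetricSpace

/-- **Properness criterion** (Lemma 2.1): if every locally absolutely continuous
curve tending to infinity has infinite `ρ`-weighted length, then `(X, d_ρ)` is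
proper and geodesic. -/
theorem confMetric_proper_and_geodesic {X : Type*} [MetricSpace X]
    [LocallyCompactSpace X] (hlen : IsLengthMetric X)
    (ρ : X → ℝ) (hρpos : ∀ x : X, 0 < ρ x) (hρcont : Continuous ρ)
    (hdiv : ∀ β : ℝ → X, (∀ b > (0 : ℝ), ACOn (fun a b : X => dist a b) β 0 b) →
      TendsToInfinityIn β →
      ∫⁻ t in Set.Ici (0 : ℝ),
        ENNReal.ofReal (ρ (β t) * mSpeed (fun a b : X => dist a b) β t) = ∞) :
    -- properness: closed balls of `d_ρ` are compact
    (∀ x : X, ∀ r : ℝ, IsCompact {y : X | confMetric ρ x y ≤ r}) ∧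
    -- geodesic: any two points are joined by a curve of `ρ`-length the distance
    (∀ x y : X, ∃ β : ℝ → X, ACOn (fun a b : X => dist a b) β 0 1 ∧
      β 0 = x ∧ β 1 = y ∧ confLen ρ β = confMetric ρ x y) := by
  have hρ0 : ∀ x, 0 ≤ ρ x := fun x => (hρpos x).le
  have hconn := hlen.rectifiablyConnected
  have hag := hasAlmostGeodesics_confMetricSpace hlen hρcont hρpos
  have hcomplete :
      @CompleteSpace X (confMetricSpace hlen hρcont hρpos).toPseudoMetricSpace.toUniformSpace :=
    @Metric.complete_of_convergent_controlled_sequences X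
      (confMetricSpace hlen hρcont hρpos).toPseudoMetricSpace (fun n => (1 / 2) ^ n)
      (fun n => by positivity) fun u hu =>
        exists_tendsto_of_confMetric_lt hlen hρcont hρpos hdiv hu
  have hproper : ∀ (x : X) (r : ℝ), IsCompact {y : X | confMetric ρ x y ≤ r} := by
    intro x r
    have h := @HasAlmostGeodesics.isCompact_closedBall X (confMetricSpace hlen hρcont hρpos) _
      hcomplete hag x r
    have heq : {y : X | confMetric ρ x y ≤ r} = {y : X | confMetric ρ y x ≤ r} := by
      ext y
      rw [mem_ofPred_eq, mem_ofPred_eq, confMetric_comm hconn hρ0]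
    rw [heq]
    exact h
  refine ⟨hproper, fun x y => ?_⟩
  obtain ⟨γ, h0, h1, hγ⟩ := @HasAlmostGeodesics.exists_geodesic X
    (confMetricSpace hlen hρcont hρpos) hag
    (@HasAlmostGeodesics.isCompact_closedBall X (confMetricSpace hlen hρcont hρpos) _
      hcomplete hag) x y
  change ∀ s ∈ Icc (0 : ℝ) 1, ∀ t ∈ Icc (0 : ℝ) 1,
    confMetric ρ (γ s) (γ t) ≤ confMetric ρ x y * |s - t| at hγ
  have hL : 0 ≤ confMetric ρ x y := confMetric_nonneg hρ0
  have hmem : ∀ t ∈ Icc (0 : ℝ) 1, γ t ∈ {z : X | confMetric ρ x z ≤ confMetric ρ x y} := by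
    intro t ht
    have h := hγ 0 (by simp) t ht
    rw [h0, zero_sub, abs_neg, abs_of_nonneg ht.1] at h
    exact h.trans (mul_le_of_le_one_right hL ht.2)
  obtain ⟨C, hC⟩ := exists_dist_le_mul_confMetric hconn hρcont hρpos
    (hproper x (confMetric ρ x y))
  have hac : AbsCont γ 0 1 := by
    refine absCont_of_dist_le (C := |C| * confMetric ρ x y) fun s hs t ht => ?_
    refine (hC _ (hmem s hs) _ (hmem t ht)).trans ?_
    rw [mul_assoc]
    exact mul_le_mul (le_abs_self C) (hγ s hs t ht) (confMetric_nonneg hρ0) (abs_nonneg C)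
  refine ⟨γ, hac, h0, h1, le_antisymm ?_ ?_⟩
  · have hspeed : ∀ t ∈ Ioo (0 : ℝ) 1, ρ (γ t) * speed γ t ≤ confMetric ρ x y := by
      intro t ht
      refine mul_speed_le_of_confMetric_le hconn hρcont hρpos ?_
      filter_upwards [eventually_add_mem_Icc ht] with e he
      refine (hγ t (Ioo_subset_Icc_self ht) _ he).trans_eq ?_
      rw [sub_add_cancel_left, abs_neg]
    refine (intervalIntegral.integral_mono_on_of_le_Ioo zero_le_one
      (hac.intervalIntegrable_mul_speed zero_le_one hρcont)
      (intervalIntegrable_const (c := confMetric ρ x y)) hspeed).trans_eq ?_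
    simp
  · have h := confMetric_le_weightedLength hρ0 hac zero_le_one
    rwa [h0, h1] at h

end
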